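/- arXiv:math-ph/0511024 — 2 statements merged into one kernel-verified Lean document; each statement's English description precedes it below -/
import Mathlib

section
/- If h is an n×n complex matrix such that s − h†sh is positive definite, then s − h s h† is positive definite as well; equivalently, the set H_{p,q} is closed under the operation h ↦ s h† s. -/
/-!
Write `s = p - (1 - p)` for the projection `p` onto the `+1`-eigenspace of `s`. The
Potapov–Ginzburg transform of `h` exchanges `h` for the matrix `S = B * A⁻¹`, where
`A = p + (1 - p) * h` and `B = (1 - p) + p * h`. As `Aᴴ * A - Bᴴ * B = s - hᴴ * s * h`, the
hypothesis on `h` says that `S` is a strict contraction, and then so is `Sᴴ`. Replacing `h` by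
`-hᴴ` replaces `S` by `-Sᴴ`, which turns the last assertion back into the positivity of
`s - h * s * hᴴ`.
-/

open Matrix
open scoped ComplexOrder

/-- The signature matrix `s = diag(1,…,1,−1,…,−1)` with `p` entries `+1` and `q`
entries `−1`. -/
noncomputable def sMat (p q : ℕ) : Matrix (Fin (p + q)) (Fin (p + q)) ℂ :=
  Matrix.diagonal (fun i => if (i : ℕ) < p then 1 else -1)

section Splice

variable {R : Type*} [Ring R]

/-- The element `p + (1 - p) * h`, which agrees with `1` in its `p`-component and with `h` in its
`(1 - p)`-component. For a projection `p`, the denominator and the numerator of the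
Potapov–Ginzburg transform of `h` are `splice p h` and `splice (1 - p) h`. -/
def splice (p h : R) : R :=
  p + (1 - p) * h

theorem mul_splice_add_one_sub_mul_splice {p : R} (hp : IsIdempotentElem p) (h : R) :
    p * splice p h + (1 - p) * splice (1 - p) h = 1 := by
  simp [splice, mul_add, ← mul_assoc, hp.eq, hp.one_sub.eq, hp.mul_one_sub_self,
    hp.one_sub_mul_self]

variable [StarRing R] {p : R}

theorem star_splice (hp : IsSelfAdjoint p) (h : R) :
    star (splice p h) = p + star h * (1 - p) := by
  simp [splice, hp.star_eq]

theorem star_splice_mul_splice (hp : IsStarProjection p) (h : R) :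
    star (splice p h) * splice p h = p + star h * (1 - p) * h := by
  have hpp := hp.isIdempotentElem
  rw [star_splice hp.isSelfAdjoint, splice]
  calc (p + star h * (1 - p)) * (p + (1 - p) * h)
      = p * p + p * (1 - p) * h + star h * ((1 - p) * p)
          + star h * ((1 - p) * (1 - p)) * h := by noncomm_ring
    _ = p + star h * (1 - p) * h := by
      simp only [hpp.eq, hpp.one_sub.eq, hpp.mul_one_sub_self, hpp.one_sub_mul_self, zero_mul,
        mul_zero, add_zero]

theorem star_splice_mul_splice_sub (hp : IsStarProjection p) (h : R) :
    star (splice p h) * splice p h - star (splice (1 - p) h) * splice (1 - p) h =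
      (p - (1 - p)) - star h * (p - (1 - p)) * h := by
  rw [star_splice_mul_splice hp, star_splice_mul_splice hp.one_sub]
  noncomm_ring

theorem star_splice_neg_star_mul_splice (hp : IsStarProjection p) (h : R) :
    star (splice p (-star h)) * splice (1 - p) h = p * h - h * (1 - p) := by
  have hpp := hp.isIdempotentElem
  rw [star_splice hp.isSelfAdjoint, splice, star_neg, star_star, sub_sub_cancel]
  calc (p + -h * (1 - p)) * (1 - p + p * h)
      = p * (1 - p) + p * p * h - h * ((1 - p) * (1 - p)) - h * ((1 - p) * p) * h := by
        noncomm_ring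
    _ = p * h - h * (1 - p) := by
      simp only [hpp.eq, hpp.one_sub.eq, hpp.mul_one_sub_self, hpp.one_sub_mul_self, zero_mul,
        mul_zero, zero_add, sub_zero]

theorem star_splice_neg_star_mul_splice_comm (hp : IsStarProjection p) (h : R) :
    star (splice p (-star h)) * splice (1 - p) h =
      -star (splice (1 - p) (-star h)) * splice p h := by
  have hcompl := star_splice_neg_star_mul_splice hp.one_sub h
  rw [sub_sub_cancel] at hcompl
  rw [star_splice_neg_star_mul_splice hp, neg_mul, hcompl]
  noncomm_ring

theorem isUnit_splice_neg_star [IsDedekindFiniteMonoid R] (hp : IsStarProjection p) {h : R}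
    (hu : IsUnit (splice p h)) : IsUnit (splice p (-star h)) := by
  obtain ⟨a, ha⟩ := hu
  set C := star (splice p (-star h))
  set D := star (splice (1 - p) (-star h))
  have hD : C * (splice (1 - p) h * ↑a⁻¹) = -D := by
    rw [← mul_assoc, star_splice_neg_star_mul_splice_comm hp, ← ha, a.mul_inv_cancel_right]
  have hCD : C * p + D * (1 - p) = 1 := by
    simpa [C, D, hp.isSelfAdjoint.star_eq] using
      congrArg star (mul_splice_add_one_sub_mul_splice hp.isIdempotentElem (-star h))
  refine isUnit_star.mp (.of_mul_eq_one (p - splice (1 - p) h * ↑a⁻¹ * (1 - p)) ?_)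
  rw [mul_sub, ← mul_assoc C, hD, neg_mul, sub_neg_eq_add, hCD]

end Splice

theorem exists_isStarProjection_sub_one_sub_eq {R : Type*} [Ring R] [StarRing R]
    [Invertible (2 : R)] {s : R} (hs : IsSelfAdjoint s) (hss : s * s = 1) :
    ∃ p : R, IsStarProjection p ∧ p - (1 - p) = s := by
  have hhalf : IsSelfAdjoint (⅟2 : R) := (IsSelfAdjoint.ofNat 2).invOf
  have hcomm : Commute (⅟2 : R) (1 + s) := (Commute.ofNat_left 2 (1 + s)).invOf_left
  have hsq : (1 + s) * (1 + s) = 2 * (1 + s) := by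
    rw [mul_add, add_mul, add_mul, hss]
    noncomm_ring
  refine ⟨⅟2 * (1 + s), ⟨?_, ?_⟩, ?_⟩
  · rw [IsIdempotentElem, hcomm.symm.mul_mul_mul_comm, hsq, mul_assoc, invOf_mul_cancel_left]
  · exact (hhalf.commute_iff ((IsSelfAdjoint.one R).add hs)).mp hcomm
  · rw [sub_sub_eq_add_sub, ← two_mul, mul_invOf_cancel_left, add_sub_cancel_left]

section PosDef

variable {m n K : Type*} [Fintype m] [Fintype n]
  [Field K] [PartialOrder K] [StarRing K] [StarOrderedRing K]

theorem posDef_one_sub_mul_conjTranspose [DecidableEq m] [DecidableEq n] {S : Matrix m n K}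
    (hS : (1 - Sᴴ * S).PosDef) : (1 - S * Sᴴ).PosDef := by
  have woodbury : (1 + S * (1 - Sᴴ * S)⁻¹ * Sᴴ)⁻¹ = 1 - S * Sᴴ := by
    have hinv := nonsing_inv_nonsing_inv _ ((isUnit_iff_isUnit_det _).mp hS.isUnit)
    rw [add_mul_mul_inv_eq_sub _ _ _ _ isUnit_one hS.inv.isUnit] <;> simp [hinv]
  rw [← woodbury]
  exact (PosDef.one.add_posSemidef (hS.inv.posSemidef.mul_mul_conjTranspose_same S)).inv

theorem isUnit_of_posDef_conjTranspose_mul_sub [DecidableEq n] {A : Matrix n n K}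
    {B : Matrix m n K} (hAB : (Aᴴ * A - Bᴴ * B).PosDef) : IsUnit A := by
  have hA : (Aᴴ * A).PosDef := by
    simpa using hAB.add_posSemidef (posSemidef_conjTranspose_mul_self B)
  exact isUnit_of_mul_isUnit_right hA.isUnit

theorem posDef_mul_conjTranspose_sub_of_mul_eq_mul [DecidableEq m] {A : Matrix n n K}
    {B D : Matrix m n K} {C : Matrix m m K} (hAB : (Aᴴ * A - Bᴴ * B).PosDef) (hC : IsUnit C)
    (hCD : C * B = D * A) : (C * Cᴴ - D * Dᴴ).PosDef := by
  classical
  have hA := isUnit_of_posDef_conjTranspose_mul_sub hAB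
  have hAdet := (isUnit_iff_isUnit_det A).mp hA
  obtain ⟨S, rfl⟩ : ∃ S, B = S * A := ⟨B * A⁻¹, (nonsing_inv_mul_cancel_right A B hAdet).symm⟩
  obtain rfl : D = C * S := by
    rw [← mul_nonsing_inv_cancel_right A D hAdet, ← hCD, ← Matrix.mul_assoc,
      mul_nonsing_inv_cancel_right A _ hAdet]
  have hS : (1 - Sᴴ * S).PosDef := by
    rw [← IsUnit.posDef_star_left_conjugate_iff hA]
    simpa [star_eq_conjTranspose, mul_sub, sub_mul, Matrix.mul_assoc] using hAB
  have hdual := (IsUnit.posDef_star_right_conjugate_iff hC).mpr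
    (posDef_one_sub_mul_conjTranspose hS)
  simpa [star_eq_conjTranspose, mul_sub, sub_mul, Matrix.mul_assoc] using hdual

theorem posDef_sub_mul_mul_star_of_isStarProjection [DecidableEq n] {p h : Matrix n n K}
    (hp : IsStarProjection p) (hh : (p - (1 - p) - star h * (p - (1 - p)) * h).PosDef) :
    (p - (1 - p) - h * (p - (1 - p)) * star h).PosDef := by
  rw [← star_splice_mul_splice_sub hp] at hh
  have hu : IsUnit (splice p h) := isUnit_of_posDef_conjTranspose_mul_sub hh
  have hdual := posDef_mul_conjTranspose_sub_of_mul_eq_mul hh (isUnit_splice_neg_star hp hu).star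
    (star_splice_neg_star_mul_splice_comm hp h)
  simpa [← star_eq_conjTranspose, star_splice_mul_splice_sub hp] using hdual

theorem Hpq_closed_under_star_general [DecidableEq n] {s h : Matrix n n K} (hs : s.IsHermitian)
    (hss : s * s = 1) (hh : (s - hᴴ * s * h).PosDef) : (s - h * s * hᴴ).PosDef := by
  have two_isUnit : IsUnit (2 : Matrix n n K) := by
    simpa only [map_ofNat] using (IsUnit.mk0 (2 : K) two_ne_zero).map (algebraMap K (Matrix n n K))
  let := two_isUnit.invertible
  obtain ⟨p, hp, rfl⟩ := exists_isStarProjection_sub_one_sub_eq hs.isSelfAdjoint hss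
  exact posDef_sub_mul_mul_star_of_isStarProjection hp hh

end PosDef

theorem isHermitian_sMat (p q : ℕ) : (sMat p q).IsHermitian :=
  isHermitian_diagonal_of_self_adjoint _ <| by
    ext i
    by_cases hi : (i : ℕ) < p <;> simp [hi]

theorem sMat_mul_self (p q : ℕ) : sMat p q * sMat p q = 1 := by
  rw [sMat, diagonal_mul_diagonal, ← diagonal_one]
  congr 1
  ext i
  split_ifs <;> simp

/-- **Corollary 5.4 (second part)**: if `s − h†sh` is positive definite then so is
`s − hsh†`; i.e. `H_{p,q}` is closed under `h ↦ sh†s`. -/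
theorem Hpq_closed_under_star (p q : ℕ) (hp : 1 ≤ p) (hq : 1 ≤ q)
    (h : Matrix (Fin (p + q)) (Fin (p + q)) ℂ)
    (hh : (sMat p q - hᴴ * sMat p q * h).PosDef) :
    (sMat p q - h * sMat p q * hᴴ).PosDef :=
  Hpq_closed_under_star_general (isHermitian_sMat p q) (sMat_mul_self p q) hh
end

section
/- Let x, y ∈ H_{p,q}, so that 1_n − x, 1_n − y and 1_n − xy are invertible, and set a_x = s(1_n + x)(1_n − x)^{-1}, a_y = s(1_n + y)(1_n − y)^{-1}, a_{xy} = s(1_n + xy)(1_n − xy)^{-1}. Then the matrix a_x + a_y is invertible and a_{xy} + s = (a_y + s)(a_x + a_y)^{-1}(a_x + s); that is, the Cayley transform intertwines matrix multiplication in H_{p,q} with the composition law X ∘ Y = (Y + s)(X + Y)^{-1}(X + s) − s on ζ_s^+. -/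
open Matrix
open scoped ComplexOrder

/-! Both sides of the law are products of simple factors: `a_h + s = 2s(1 - h)⁻¹`, and
`1 - xy = (1 - x) + (1 - y) - (1 - x)(1 - y)` yields `a_x + a_y = 2s(1 - x)⁻¹(1 - xy)(1 - y)⁻¹`.
In `(a_y + s)(a_x + a_y)⁻¹(a_x + s)` everything then cancels except `2s(1 - xy)⁻¹ = a_{xy} + s`.

The inverses exist because a fixed vector `v` of `x` satisfies `v†(s - x†sx)v = 0`, and because
`s - (xy)†s(xy) = (s - y†sy) + y†(s - x†sx)y` is again positive definite. -/

section CayleyTransform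

open scoped Ring

variable {A : Type*} [Ring A] {s h x y : A}

/-- The Cayley transform `a_h = s(1 + h)(1 - h)⁻¹` of `h` relative to `s`, in an arbitrary ring
(with `Ring.inverse`, which is the nonsingular inverse `⁻¹` for matrices).
It is `0` when `1 - h` is not a unit. -/
noncomputable def cayleyTransform (s h : A) : A :=
  s * (1 + h) * (1 - h)⁻¹ʳ

theorem cayleyTransform_add_self (hh : IsUnit (1 - h)) :
    cayleyTransform s h + s = 2 * s * (1 - h)⁻¹ʳ :=
  calc
    cayleyTransform s h + s = s * (1 + h) * (1 - h)⁻¹ʳ + s * (1 - h) * (1 - h)⁻¹ʳ := by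
      rw [Ring.mul_inverse_cancel_right _ _ hh, cayleyTransform]
    _ = 2 * s * (1 - h)⁻¹ʳ := by noncomm_ring

theorem isUnit_cayleyTransform_add_self (h2 : IsUnit (2 : A)) (hs : IsUnit s)
    (hh : IsUnit (1 - h)) : IsUnit (cayleyTransform s h + s) := by
  rw [cayleyTransform_add_self hh]
  exact (h2.mul hs).mul hh.ringInverse

theorem inverse_one_sub_mul_one_sub_mul_mul_inverse_one_sub (hx : IsUnit (1 - x))
    (hy : IsUnit (1 - y)) :
    (1 - x)⁻¹ʳ * (1 - x * y) * (1 - y)⁻¹ʳ = (1 - x)⁻¹ʳ + (1 - y)⁻¹ʳ - 1 :=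
  calc
    (1 - x)⁻¹ʳ * (1 - x * y) * (1 - y)⁻¹ʳ
      = (1 - x)⁻¹ʳ * ((1 - y) * (1 - y)⁻¹ʳ) + (1 - x)⁻¹ʳ * (1 - x) * (1 - y)⁻¹ʳ
          - (1 - x)⁻¹ʳ * (1 - x) * ((1 - y) * (1 - y)⁻¹ʳ) := by noncomm_ring
    _ = (1 - x)⁻¹ʳ + (1 - y)⁻¹ʳ - 1 := by
      rw [Ring.mul_inverse_cancel _ hy, Ring.inverse_mul_cancel _ hx, mul_one, one_mul, one_mul]

theorem cayleyTransform_add_cayleyTransform (hx : IsUnit (1 - x)) (hy : IsUnit (1 - y)) :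
    cayleyTransform s x + cayleyTransform s y =
      (cayleyTransform s x + s) * (1 - x * y) * (1 - y)⁻¹ʳ :=
  calc
    cayleyTransform s x + cayleyTransform s y
      = (cayleyTransform s x + s) + (cayleyTransform s y + s) - 2 * s := by noncomm_ring
    _ = 2 * s * ((1 - x)⁻¹ʳ + (1 - y)⁻¹ʳ - 1) := by
      rw [cayleyTransform_add_self hx, cayleyTransform_add_self hy]; noncomm_ring
    _ = (cayleyTransform s x + s) * (1 - x * y) * (1 - y)⁻¹ʳ := by
      rw [← inverse_one_sub_mul_one_sub_mul_mul_inverse_one_sub hx hy,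
        cayleyTransform_add_self hx]
      simp only [mul_assoc]

theorem isUnit_cayleyTransform_add_cayleyTransform (h2 : IsUnit (2 : A)) (hs : IsUnit s)
    (hx : IsUnit (1 - x)) (hy : IsUnit (1 - y)) (hxy : IsUnit (1 - x * y)) :
    IsUnit (cayleyTransform s x + cayleyTransform s y) := by
  rw [cayleyTransform_add_cayleyTransform hx hy]
  exact ((isUnit_cayleyTransform_add_self h2 hs hx).mul hxy).mul hy.ringInverse

theorem cayleyTransform_mul_add_self (h2 : IsUnit (2 : A)) (hs : IsUnit s)
    (hx : IsUnit (1 - x)) (hy : IsUnit (1 - y)) (hxy : IsUnit (1 - x * y)) :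
    cayleyTransform s (x * y) + s =
      (cayleyTransform s y + s) * (cayleyTransform s x + cayleyTransform s y)⁻¹ʳ *
        (cayleyTransform s x + s) := by
  have hxs : IsUnit (cayleyTransform s x + s) := isUnit_cayleyTransform_add_self h2 hs hx
  have sum_inverse : (cayleyTransform s x + cayleyTransform s y)⁻¹ʳ =
      (1 - y) * ((1 - x * y)⁻¹ʳ * (cayleyTransform s x + s)⁻¹ʳ) := by
    rw [cayleyTransform_add_cayleyTransform hx hy, Ring.inverse_mul (.inr hy.ringInverse),
      Ring.inverse_mul (.inl hxs), Ring.inverse_inverse hy]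
  symm
  calc
    (cayleyTransform s y + s) * (cayleyTransform s x + cayleyTransform s y)⁻¹ʳ *
        (cayleyTransform s x + s)
      = 2 * s * ((1 - y)⁻¹ʳ * (1 - y)) * (1 - x * y)⁻¹ʳ *
          ((cayleyTransform s x + s)⁻¹ʳ * (cayleyTransform s x + s)) := by
        rw [sum_inverse, cayleyTransform_add_self hy]; simp only [mul_assoc]
    _ = 2 * s * (1 - x * y)⁻¹ʳ := by
        rw [Ring.inverse_mul_cancel _ hy, Ring.inverse_mul_cancel _ hxs, mul_one, mul_one]
    _ = cayleyTransform s (x * y) + s := (cayleyTransform_add_self hxy).symm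

end CayleyTransform

section StrictContractions

variable {n R K : Type*} [Fintype n]

/-- The semigroup of strict contractions of the form `v ↦ v†sv`: the matrices `h` with
`s - h†sh` positive definite. For `s = sMat p q` this is `H_{p,q}`. -/
def strictContractions [Ring R] [PartialOrder R] [StarRing R] [AddLeftMono R]
    (s : Matrix n n R) : Subsemigroup (Matrix n n R) where
  carrier := {h | (s - hᴴ * s * h).PosDef}
  mul_mem' {x y} hx hy := by
    have decomposition : s - (x * y)ᴴ * s * (x * y) =
        (s - yᴴ * s * y) + yᴴ * (s - xᴴ * s * x) * y := by
      rw [conjTranspose_mul]; noncomm_ring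
    change (s - (x * y)ᴴ * s * (x * y)).PosDef
    rw [decomposition]
    exact hy.add_posSemidef (hx.posSemidef.conjTranspose_mul_mul_same y)

theorem mulVec_ne_self_of_mem_strictContractions [Ring R] [PartialOrder R] [StarRing R]
    [AddLeftMono R] {s h : Matrix n n R} (hh : h ∈ strictContractions s) {v : n → R}
    (hv : v ≠ 0) : h *ᵥ v ≠ v := by
  intro fixed
  have form_eq : star v ⬝ᵥ (hᴴ * s * h) *ᵥ v = star v ⬝ᵥ s *ᵥ v := by
    rw [← mulVec_mulVec, ← mulVec_mulVec, fixed, dotProduct_mulVec, ← star_mulVec, fixed]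
  have form_pos : 0 < star v ⬝ᵥ (s - hᴴ * s * h) *ᵥ v := hh.dotProduct_mulVec_pos hv
  rw [sub_mulVec, dotProduct_sub, form_eq, sub_self] at form_pos
  exact form_pos.false

theorem isUnit_one_sub_of_mem_strictContractions [DecidableEq n] [Field K] [PartialOrder K]
    [StarRing K] [AddLeftMono K] {s h : Matrix n n K} (hh : h ∈ strictContractions s) :
    IsUnit (1 - h) := by
  rw [isUnit_iff_isUnit_det, isUnit_iff_ne_zero]
  intro det_eq_zero
  obtain ⟨v, hv, h_mulVec⟩ := exists_mulVec_eq_zero_iff.mpr det_eq_zero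
  rw [sub_mulVec, one_mulVec, sub_eq_zero] at h_mulVec
  exact mulVec_ne_self_of_mem_strictContractions hh hv h_mulVec.symm

end StrictContractions

theorem cayley_intertwines_composition_general {n K : Type*} [Fintype n] [DecidableEq n]
    [Field K] [PartialOrder K] [StarRing K] [StarOrderedRing K] {s x y : Matrix n n K}
    (hs : IsUnit s) (hx : x ∈ strictContractions s) (hy : y ∈ strictContractions s) :
    IsUnit (s * (1 + x) * (1 - x)⁻¹ + s * (1 + y) * (1 - y)⁻¹) ∧
    s * (1 + x * y) * (1 - x * y)⁻¹ + s =
      (s * (1 + y) * (1 - y)⁻¹ + s) *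
        (s * (1 + x) * (1 - x)⁻¹ + s * (1 + y) * (1 - y)⁻¹)⁻¹ *
        (s * (1 + x) * (1 - x)⁻¹ + s) := by
  have h2 : IsUnit (2 : Matrix n n K) := by
    simpa only [map_ofNat] using
      (IsUnit.mk0 (2 : K) two_ne_zero).map (algebraMap K (Matrix n n K))
  have ux : IsUnit (1 - x) := isUnit_one_sub_of_mem_strictContractions hx
  have uy : IsUnit (1 - y) := isUnit_one_sub_of_mem_strictContractions hy
  have uxy : IsUnit (1 - x * y) := isUnit_one_sub_of_mem_strictContractions (mul_mem hx hy)
  simp only [nonsing_inv_eq_ringInverse]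
  exact ⟨isUnit_cayleyTransform_add_cayleyTransform h2 hs ux uy uxy,
    cayleyTransform_mul_add_self h2 hs ux uy uxy⟩

theorem isUnit_sMat (p q : ℕ) : IsUnit (sMat p q) := by
  rw [sMat, isUnit_diagonal, Pi.isUnit_iff]
  intro i
  split_ifs
  exacts [isUnit_one, isUnit_one.neg]

/-- The Cayley transform `h ↦ a_h = s(1+h)(1−h)⁻¹` intertwines multiplication in the
semigroup `H_{p,q}` with the composition law
`X ∘ Y = (Y+s)(X+Y)⁻¹(X+s) − s` on `ζ_s⁺` (computation in the proof of Lemma 5.6). -/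
theorem cayley_intertwines_composition (p q : ℕ) (hp : 1 ≤ p) (hq : 1 ≤ q)
    (x y : Matrix (Fin (p + q)) (Fin (p + q)) ℂ)
    (hx : (sMat p q - xᴴ * sMat p q * x).PosDef)
    (hy : (sMat p q - yᴴ * sMat p q * y).PosDef) :
    IsUnit (sMat p q * (1 + x) * (1 - x)⁻¹ + sMat p q * (1 + y) * (1 - y)⁻¹) ∧
    sMat p q * (1 + x * y) * (1 - x * y)⁻¹ + sMat p q =
      (sMat p q * (1 + y) * (1 - y)⁻¹ + sMat p q) *
        (sMat p q * (1 + x) * (1 - x)⁻¹ + sMat p q * (1 + y) * (1 - y)⁻¹)⁻¹ *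
        (sMat p q * (1 + x) * (1 - x)⁻¹ + sMat p q) := by
  exact cayley_intertwines_composition_general (isUnit_sMat p q) hx hy
end
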